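/- Let d ≥ 2 and define, for ψ ∈ C_c^∞(ℝ^d, ℂ), l[ψ] := ∫_{ℝ^d} |∇ψ(y)|² dy − ((d−2)/2)² ∫_{ℝ^d} |ψ(y)|²/|y|² dy + (1/16) ∫_{ℝ^d} |y|² |ψ(y)|² dy. Then the infimum of l[ψ] / ∫_{ℝ^d} |ψ|² dy over all nonzero ψ ∈ C_c^∞(ℝ^d, ℂ) equals 1/2; that is, l[ψ] ≥ (1/2) ∫ |ψ|² for every ψ ∈ C_c^∞(ℝ^d, ℂ), and for every ε > 0 there exists ψ ∈ C_c^∞(ℝ^d, ℂ), ψ ≠ 0, with l[ψ] < (1/2 + ε) ∫ |ψ|². -/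

import Mathlib

open MeasureTheory Real

/-- The quadratic form `l[ψ]` of the operator `−Δ − c_d/|y|² + |y|²/16`. -/
noncomputable def lForm (d : ℕ) (ψ : EuclideanSpace ℝ (Fin d) → ℂ) : ℝ :=
  (∫ y, ∑ j, ‖fderiv ℝ ψ y (EuclideanSpace.single j (1:ℝ))‖ ^ 2)
  - ((d - 2 : ℝ)/2)^2 * (∫ y, ‖ψ y‖^2 / ‖y‖^2)
  + (1/16 : ℝ) * ∫ y, ‖y‖^2 * ‖ψ y‖^2

/-!
Write `c = (d - 2) / 2`. The function `φ(y) = ‖y‖ ^ (-c) * exp (-ω * ‖y‖ ^ 2 / 2)` is a formal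
eigenfunction of `-Δ - c ^ 2 / ‖y‖ ^ 2 + ω ^ 2 * ‖y‖ ^ 2` with eigenvalue `2 * ω`; here `ω = 1 / 4`.
The field `V = -∇φ / φ = (c / ‖y‖ ^ 2 + ω) • y` satisfies
`div V - ‖V‖ ^ 2 = c ^ 2 / ‖y‖ ^ 2 + 2 * ω - ω ^ 2 * ‖y‖ ^ 2`, and completing the square in
`∫ ‖∇ψ‖ ^ 2 = ∫ ‖∇ψ + ψ V‖ ^ 2 + ∫ (div V - ‖V‖ ^ 2) * ‖ψ‖ ^ 2` gives the lower bound when `ψ`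
vanishes near `0`. For other `ψ` one replaces `‖y‖ ^ 2` by `‖y‖ ^ 2 + δ` in `V`, which adds only
nonnegative terms to the potential, and lets `δ → 0`.

For optimality take `ψ(y) = χ(t * log ‖y‖) * φ(y)`. The remaining square is that of
`φ ∇(χ(t * log ‖y‖))`, and in polar coordinates `φ ^ 2` cancels the Jacobian up to
`r * exp (-ω * r ^ 2) ≤ r`. Its integral is therefore at most a constant times
`∫ t ^ 2 * χ'(t * log r) ^ 2 dr / r = t * ∫ χ' ^ 2`, while `∫ ‖ψ‖ ^ 2` stays bounded below.
-/

open Filter Module Topology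
open scoped RealInnerProductSpace

lemma integral_fderiv_apply_eq_zero {E G : Type*} [NormedAddCommGroup E] [NormedSpace ℝ E]
    [FiniteDimensional ℝ E] [MeasurableSpace E] [BorelSpace E] [NormedAddCommGroup G]
    [NormedSpace ℝ G] {μ : Measure E} [μ.IsAddHaarMeasure] {f : E → G} (hf : ContDiff ℝ 1 f)
    (hfc : HasCompactSupport f) (v : E) : ∫ y, fderiv ℝ f y v ∂μ = 0 := by
  have hf' : Integrable (fun y => fderiv ℝ f y v) μ :=
    ((hf.continuous_fderiv one_ne_zero).clm_apply continuous_const).integrable_of_hasCompactSupport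
      (hfc.fderiv_apply ℝ v)
  simpa using integral_smul_fderiv_eq_neg_fderiv_smul_of_integrable (μ := μ)
    (f := fun _ : E => (1 : ℝ)) (g := f) (v := v) (by simp) (by simpa using hf')
    (by simpa using hf.continuous.integrable_of_hasCompactSupport hfc)
    (fun _ _ => differentiableAt_const _) (fun y _ => hf.differentiable one_ne_zero y)

section Divergence

variable {E : Type*} [NormedAddCommGroup E] [NormedSpace ℝ E]

/-- The divergence of a vector field on a finite-dimensional space, encoded without coordinates as
the trace of its derivative. -/
noncomputable def divergence (V : E → E) (y : E) : ℝ :=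
  LinearMap.trace ℝ E (fderiv ℝ V y)

variable [FiniteDimensional ℝ E]

lemma divergence_smul {f : E → ℝ} {V : E → E} {y : E} (hf : DifferentiableAt ℝ f y)
    (hV : DifferentiableAt ℝ V y) :
    divergence (fun z => f z • V z) y = f y * divergence V y + fderiv ℝ f y (V y) := by
  have hfV : fderiv ℝ (fun z => f z • V z) y
      = f y • fderiv ℝ V y + (fderiv ℝ f y).smulRight (V y) := fderiv_fun_smul hf hV
  simp [divergence, hfV, LinearMap.trace_smulRight]

lemma divergence_id (y : E) : divergence (fun z : E => z) y = finrank ℝ E := by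
  simp [divergence]

end Divergence

section IntegralDivergence

variable {E : Type*} [NormedAddCommGroup E] [InnerProductSpace ℝ E]

lemma divergence_eq_sum_inner {ι : Type*} [Fintype ι] (b : OrthonormalBasis ι ℝ E) (V : E → E)
    (y : E) : divergence V y = ∑ i, ⟪b i, fderiv ℝ V y (b i)⟫ := by
  simp [divergence, LinearMap.trace_eq_sum_inner _ b]

variable [FiniteDimensional ℝ E]

lemma continuous_divergence {V : E → E} (hV : ContDiff ℝ 1 V) :
    Continuous (divergence V) := by
  have := hV.continuous_fderiv one_ne_zero
  simp_rw [funext (divergence_eq_sum_inner (stdOrthonormalBasis ℝ E) V)]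
  fun_prop

variable [MeasurableSpace E] [BorelSpace E] {μ : Measure E} [μ.IsAddHaarMeasure]

lemma integrable_divergence {V : E → E} (hV : ContDiff ℝ 1 V) (hVc : HasCompactSupport V) :
    Integrable (divergence V) μ :=
  (continuous_divergence hV).integrable_of_hasCompactSupport <|
    (hVc.fderiv ℝ).comp_left (g := fun T : E →L[ℝ] E => LinearMap.trace ℝ E T) (by simp)

theorem integral_divergence_eq_zero {V : E → E} (hV : ContDiff ℝ 1 V)
    (hVc : HasCompactSupport V) : ∫ y, divergence V y ∂μ = 0 := by
  let b := stdOrthonormalBasis ℝ E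
  have hcoord (i) : ContDiff ℝ 1 fun y => ⟪b i, V y⟫ := contDiff_const.inner ℝ hV
  have hcoordc (i) : HasCompactSupport fun y => ⟪b i, V y⟫ :=
    hVc.comp_left (g := fun w => ⟪b i, w⟫) (inner_zero_right _)
  have hfderiv (i) (y) : ⟪b i, fderiv ℝ V y (b i)⟫ = fderiv ℝ (fun z => ⟪b i, V z⟫) y (b i) := by
    simp [fderiv_inner_apply ℝ (differentiableAt_const (b i)) (hV.differentiable one_ne_zero y)]
  simp_rw [divergence_eq_sum_inner b, hfderiv]
  rw [integral_finsetSum _ fun i _ =>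
    (((hcoord i).continuous_fderiv one_ne_zero).clm_apply
      continuous_const).integrable_of_hasCompactSupport ((hcoordc i).fderiv_apply ℝ _)]
  exact Finset.sum_eq_zero fun i _ => integral_fderiv_apply_eq_zero (hcoord i) (hcoordc i) _

end IntegralDivergence

lemma contDiff_of_forall_mem_tsupport {E F : Type*} [NormedAddCommGroup E] [NormedSpace ℝ E]
    [NormedAddCommGroup F] [NormedSpace ℝ F] {n : ℕ∞} {f : E → F}
    (hf : ∀ y ∈ tsupport f, ContDiffAt ℝ n f y) : ContDiff ℝ n f :=
  contMDiff_iff_contDiff.1 <| contMDiff_of_tsupport fun y hy =>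
    contMDiffAt_iff_contDiffAt.2 (hf y hy)

lemma integrable_mul_norm_sq {X F : Type*} [TopologicalSpace X] [T2Space X] [MeasurableSpace X]
    [OpensMeasurableSpace X] [NormedAddCommGroup F] {μ : Measure X} [IsFiniteMeasureOnCompacts μ]
    {ψ : X → F} {f : X → ℝ} (hψ : Continuous ψ) (hψc : HasCompactSupport ψ)
    (hf : ContinuousOn f (tsupport ψ)) :
    Integrable (fun y => f y * ‖ψ y‖ ^ 2) μ := by
  have hsupp : Function.support (fun y => f y * ‖ψ y‖ ^ 2) ⊆ tsupport ψ := fun y hy =>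
    subset_tsupport ψ fun h => hy (by simp [h])
  rw [← integrableOn_iff_integrable_of_support_subset hsupp]
  exact (hf.mul (by fun_prop)).integrableOn_compact hψc

lemma tendsto_integral_div_norm_sq_add {E : Type*} [NormedAddCommGroup E] [MeasurableSpace E]
    [BorelSpace E] {μ : Measure E} [NullSingletonClass μ] {f : E → ℝ}
    (hf : AEStronglyMeasurable f μ) (hfi : Integrable (fun y => f y / ‖y‖ ^ 2) μ) :
    Tendsto (fun δ => ∫ y, f y / (‖y‖ ^ 2 + δ) ∂μ) (𝓝[>] 0) (𝓝 (∫ y, f y / ‖y‖ ^ 2 ∂μ)) := by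
  have hne : ∀ᵐ y ∂μ, y ≠ 0 := by simp [ae_iff]
  refine tendsto_integral_filter_of_dominated_convergence (fun y => ‖f y / ‖y‖ ^ 2‖)
    (.of_forall fun δ => (hf.aemeasurable.div (by fun_prop)).aestronglyMeasurable) ?_ hfi.norm ?_
  · filter_upwards [self_mem_nhdsWithin] with δ (hδ : 0 < δ)
    filter_upwards [hne] with y hy
    have : 0 < ‖y‖ := norm_pos_iff.2 hy
    rw [norm_div, norm_div, norm_of_nonneg (by positivity : 0 ≤ ‖y‖ ^ 2 + δ),
      norm_of_nonneg (by positivity : 0 ≤ ‖y‖ ^ 2)]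
    gcongr
    linarith
  · filter_upwards [hne] with y hy
    have hden : ContinuousAt (fun δ => f y / (‖y‖ ^ 2 + δ)) 0 := by
      have : ‖y‖ ^ 2 + 0 ≠ 0 := by simpa using hy
      fun_prop (disch := assumption)
    simpa using hden.tendsto.mono_left nhdsWithin_le_nhds

lemma integrable_divergence_sub_norm_sq_mul {E F : Type*} [NormedAddCommGroup E]
    [InnerProductSpace ℝ E] [FiniteDimensional ℝ E] [MeasurableSpace E] [BorelSpace E]
    [NormedAddCommGroup F] {μ : Measure E} [IsFiniteMeasureOnCompacts μ] {V : E → E} {ψ : E → F}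
    (hψ : Continuous ψ) (hψc : HasCompactSupport ψ) (hV : ∀ y ∈ tsupport ψ, ContDiffAt ℝ 1 V y) :
    Integrable (fun y => (divergence V y - ‖V y‖ ^ 2) * ‖ψ y‖ ^ 2) μ := by
  refine integrable_mul_norm_sq hψ hψc fun y hy => ContinuousAt.continuousWithinAt ?_
  have := (hV y hy).continuousAt
  have := (hV y hy).continuousAt_fderiv one_ne_zero
  simp_rw [funext (divergence_eq_sum_inner (stdOrthonormalBasis ℝ E) V)]
  fun_prop

section CompletingTheSquare

variable {ι E F : Type*} [Fintype ι] [NormedAddCommGroup E] [InnerProductSpace ℝ E]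
  [NormedAddCommGroup F]

/-- The squared Hilbert–Schmidt norm of `Dψ + ψ ⊗ V` at `y`, computed in the orthonormal basis `b`.
It vanishes when `ψ` is a ground state with logarithmic gradient `-V`. -/
noncomputable def twistedEnergyDensity [NormedSpace ℝ F] (b : OrthonormalBasis ι ℝ E)
    (V : E → E) (ψ : E → F) (y : E) : ℝ :=
  ∑ i, ‖fderiv ℝ ψ y (b i) + ⟪b i, V y⟫ • ψ y‖ ^ 2

lemma integrable_sum_norm_fderiv_sq [NormedSpace ℝ F] [MeasurableSpace E] [BorelSpace E]
    {μ : Measure E} [IsFiniteMeasureOnCompacts μ] (b : OrthonormalBasis ι ℝ E) {ψ : E → F}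
    (hψ : ContDiff ℝ 1 ψ) (hψc : HasCompactSupport ψ) :
    Integrable (fun y => ∑ i, ‖fderiv ℝ ψ y (b i)‖ ^ 2) μ := by
  have := hψ.continuous_fderiv one_ne_zero
  exact Continuous.integrable_of_hasCompactSupport (by fun_prop) <|
    (hψc.fderiv ℝ).comp_left (g := fun T : E →L[ℝ] F => ∑ i, ‖T (b i)‖ ^ 2) (by simp)

variable [InnerProductSpace ℝ F]

lemma fderiv_norm_sq_comp_apply {ψ : E → F} {y : E} (hψ : DifferentiableAt ℝ ψ y) (v : E) :
    fderiv ℝ (fun z => ‖ψ z‖ ^ 2) y v = 2 * ⟪fderiv ℝ ψ y v, ψ y⟫ := by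
  have h : HasFDerivAt (fun z => ‖ψ z‖ ^ 2) _ y := hψ.hasFDerivAt.norm_sq
  simp [h.fderiv, real_inner_comm]

lemma sum_norm_fderiv_sq_add_divergence [FiniteDimensional ℝ E] (b : OrthonormalBasis ι ℝ E)
    {V : E → E} {ψ : E → F} {y : E} (hψ : DifferentiableAt ℝ ψ y) (hV : DifferentiableAt ℝ V y) :
    ∑ i, ‖fderiv ℝ ψ y (b i)‖ ^ 2 + divergence (fun z => ‖ψ z‖ ^ 2 • V z) y
      = twistedEnergyDensity b V ψ y + (divergence V y - ‖V y‖ ^ 2) * ‖ψ y‖ ^ 2 := by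
  have hcross : ⟪fderiv ℝ ψ y (V y), ψ y⟫ = ∑ i, ⟪b i, V y⟫ * ⟪fderiv ℝ ψ y (b i), ψ y⟫ := by
    conv_lhs => rw [← b.sum_repr' (V y)]
    simp [sum_inner, real_inner_smul_left]
  have hexpand (i) : ‖fderiv ℝ ψ y (b i) + ⟪b i, V y⟫ • ψ y‖ ^ 2
      = ‖fderiv ℝ ψ y (b i)‖ ^ 2 + 2 * (⟪b i, V y⟫ * ⟪fderiv ℝ ψ y (b i), ψ y⟫)
        + ⟪b i, V y⟫ ^ 2 * ‖ψ y‖ ^ 2 := by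
    rw [norm_add_sq_real, real_inner_smul_right, norm_smul, mul_pow, norm_eq_abs, sq_abs]
  rw [divergence_smul (hψ.norm_sq ℝ) hV, fderiv_norm_sq_comp_apply hψ, hcross,
    twistedEnergyDensity]
  simp_rw [hexpand, Finset.sum_add_distrib, ← Finset.mul_sum, ← Finset.sum_mul,
    b.sum_sq_inner_right]
  ring

variable [FiniteDimensional ℝ E] [MeasurableSpace E] [BorelSpace E] {μ : Measure E}
  [μ.IsAddHaarMeasure]

theorem integral_sum_norm_fderiv_sq_eq (b : OrthonormalBasis ι ℝ E) {V : E → E} {ψ : E → F}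
    (hψ : ContDiff ℝ 1 ψ) (hψc : HasCompactSupport ψ)
    (hV : ∀ y ∈ tsupport ψ, ContDiffAt ℝ 1 V y) :
    ∫ y, ∑ i, ‖fderiv ℝ ψ y (b i)‖ ^ 2 ∂μ
      = ∫ y, twistedEnergyDensity b V ψ y ∂μ
        + ∫ y, (divergence V y - ‖V y‖ ^ 2) * ‖ψ y‖ ^ 2 ∂μ := by
  have hsupp : tsupport (fun y => ‖ψ y‖ ^ 2 • V y) ⊆ tsupport ψ :=
    (tsupport_smul_subset_left _ V).trans
      (tsupport_comp_subset (g := fun w : F => ‖w‖ ^ 2) (by simp) ψ)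
  have hW : ContDiff ℝ 1 fun y => ‖ψ y‖ ^ 2 • V y :=
    contDiff_of_forall_mem_tsupport (n := 1) fun y hy =>
      (hψ.norm_sq ℝ).contDiffAt.smul (hV y (hsupp hy))
  have hWc : HasCompactSupport fun y => ‖ψ y‖ ^ 2 • V y :=
    hψc.of_isClosed_subset (isClosed_tsupport _) hsupp
  have htwisted (y) : twistedEnergyDensity b V ψ y
      = ∑ i, ‖fderiv ℝ ψ y (b i)‖ ^ 2 + divergence (fun z => ‖ψ z‖ ^ 2 • V z) y
        - (divergence V y - ‖V y‖ ^ 2) * ‖ψ y‖ ^ 2 := by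
    by_cases hy : y ∈ tsupport ψ
    · rw [sum_norm_fderiv_sq_add_divergence b (hψ.differentiable one_ne_zero y)
        ((hV y hy).differentiableAt one_ne_zero), add_sub_cancel_right]
    · have hψ0 : ψ y = 0 := image_eq_zero_of_notMem_tsupport hy
      have hdψ0 : fderiv ℝ ψ y = 0 := fderiv_of_notMem_tsupport ℝ hy
      have hdW0 : fderiv ℝ (fun z => ‖ψ z‖ ^ 2 • V z) y = 0 :=
        fderiv_of_notMem_tsupport ℝ fun h => hy (hsupp h)
      simp [twistedEnergyDensity, divergence, hψ0, hdψ0, hdW0]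
  have hgrad := integrable_sum_norm_fderiv_sq (μ := μ) b hψ hψc
  have hdiv := integrable_divergence (μ := μ) hW hWc
  have hsum : Integrable (fun y => ∑ i, ‖fderiv ℝ ψ y (b i)‖ ^ 2
      + divergence (fun z => ‖ψ z‖ ^ 2 • V z) y) μ := hgrad.add hdiv
  simp_rw [htwisted]
  rw [integral_sub hsum (integrable_divergence_sub_norm_sq_mul hψ.continuous hψc hV),
    integral_add hgrad hdiv, integral_divergence_eq_zero hW hWc]
  ring

end CompletingTheSquare

section HardyField

variable {E : Type*} [NormedAddCommGroup E]

variable (E) in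
/-- The critical Hardy exponent `(d - 2) / 2`, whose square is the optimal constant in Hardy's
inequality in dimension `d`. -/
noncomputable def hardyExponent [NormedSpace ℝ E] : ℝ := ((finrank ℝ E : ℝ) - 2) / 2

lemma hardyExponent_nonneg [NormedSpace ℝ E] (hE : 2 ≤ finrank ℝ E) : 0 ≤ hardyExponent E := by
  have : (2 : ℝ) ≤ finrank ℝ E := by exact_mod_cast hE
  unfold hardyExponent
  linarith

/-- For `δ = 0`, minus the logarithmic gradient of the formal ground state
`‖y‖ ^ (-hardyExponent E) * exp (-ω / 2 * ‖y‖ ^ 2)`; `δ > 0` removes the singularity at `0`. -/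
noncomputable def hardyField [NormedSpace ℝ E] (ω δ : ℝ) (y : E) : E :=
  (hardyExponent E / (‖y‖ ^ 2 + δ) + ω) • y

/-- The excess of `div V - ‖V‖ ^ 2` for `V = hardyField ω δ` over the regularized potential
`hardyExponent E ^ 2 / (‖y‖ ^ 2 + δ) + 2 * ω - ω ^ 2 * ‖y‖ ^ 2`. -/
noncomputable def hardyRemainder [NormedSpace ℝ E] (ω δ : ℝ) (y : E) : ℝ :=
  δ / (‖y‖ ^ 2 + δ) * (hardyExponent E * (hardyExponent E + 2) / (‖y‖ ^ 2 + δ)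
    + 2 * hardyExponent E * ω)

lemma hardyRemainder_nonneg [NormedSpace ℝ E] (hE : 2 ≤ finrank ℝ E) {ω δ : ℝ} (hω : 0 ≤ ω)
    (hδ : 0 ≤ δ) (y : E) : 0 ≤ hardyRemainder ω δ y := by
  have := hardyExponent_nonneg hE
  unfold hardyRemainder
  positivity

variable [InnerProductSpace ℝ E]

lemma contDiffAt_hardyField {n : ℕ∞} (ω : ℝ) {δ : ℝ} {y : E} (hy : ‖y‖ ^ 2 + δ ≠ 0) :
    ContDiffAt ℝ n (hardyField ω δ) y :=
  ((contDiffAt_const.div ((contDiff_norm_sq ℝ).contDiffAt.add contDiffAt_const) hy).add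
    contDiffAt_const).smul contDiffAt_id

lemma hasFDerivAt_div_norm_sq_add (c ω : ℝ) {δ : ℝ} {y : E} (hy : ‖y‖ ^ 2 + δ ≠ 0) :
    HasFDerivAt (fun z : E => c / (‖z‖ ^ 2 + δ) + ω)
      ((-(2 * c) / (‖y‖ ^ 2 + δ) ^ 2) • innerSL ℝ y) y := by
  have hnorm : HasFDerivAt (fun z : E => ‖z‖ ^ 2 + δ) (2 • innerSL ℝ y) y :=
    (hasStrictFDerivAt_norm_sq y).hasFDerivAt.add_const δ
  have hinv : HasDerivAt (fun s : ℝ => c / s + ω) (-c / (‖y‖ ^ 2 + δ) ^ 2) (‖y‖ ^ 2 + δ) :=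
    (((hasDerivAt_inv hy).const_mul c).add_const ω).congr_deriv (by ring)
  refine (hinv.comp_hasFDerivAt y hnorm).congr_fderiv ?_
  ext v
  simp only [smul_apply, nsmul_eq_mul, Nat.cast_ofNat, innerSL_apply_apply, smul_eq_mul]
  ring

lemma divergence_hardyField_sub_norm_sq [FiniteDimensional ℝ E] (ω : ℝ) {δ : ℝ} {y : E}
    (hy : ‖y‖ ^ 2 + δ ≠ 0) :
    divergence (hardyField ω δ) y - ‖hardyField ω δ y‖ ^ 2
      = hardyExponent E ^ 2 / (‖y‖ ^ 2 + δ) + 2 * ω - ω ^ 2 * ‖y‖ ^ 2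
        + hardyRemainder ω δ y := by
  have hfactor := hasFDerivAt_div_norm_sq_add (hardyExponent E) ω hy
  have hdim : (finrank ℝ E : ℝ) = 2 * hardyExponent E + 2 := by
    unfold hardyExponent
    ring
  have hdiv : divergence (hardyField ω δ) y
      = (hardyExponent E / (‖y‖ ^ 2 + δ) + ω) * (2 * hardyExponent E + 2)
        + -(2 * hardyExponent E) / (‖y‖ ^ 2 + δ) ^ 2 * ‖y‖ ^ 2 := by
    unfold hardyField
    rw [divergence_smul (V := fun z : E => z) hfactor.differentiableAt differentiableAt_fun_id,
      divergence_id, hfactor.fderiv, hdim]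
    simp
  rw [hdiv, hardyField, hardyRemainder, norm_smul, mul_pow, norm_eq_abs, sq_abs]
  field_simp
  ring

end HardyField

section LowerBound

variable {ι E F : Type*} [Fintype ι] [NormedAddCommGroup E] [InnerProductSpace ℝ E]
  [NormedAddCommGroup F] [MeasurableSpace E]

/-- The quadratic form of `-Δ - hardyExponent E ^ 2 / ‖y‖ ^ 2 + ω ^ 2 * ‖y‖ ^ 2`, where the
Dirichlet energy is computed in the orthonormal basis `b`. -/
noncomputable def hardyOscillatorForm [NormedSpace ℝ F] (μ : Measure E)
    (b : OrthonormalBasis ι ℝ E) (ω : ℝ) (ψ : E → F) : ℝ :=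
  ∫ y, ∑ i, ‖fderiv ℝ ψ y (b i)‖ ^ 2 ∂μ
    - hardyExponent E ^ 2 * ∫ y, ‖ψ y‖ ^ 2 / ‖y‖ ^ 2 ∂μ
    + ω ^ 2 * ∫ y, ‖y‖ ^ 2 * ‖ψ y‖ ^ 2 ∂μ

variable [InnerProductSpace ℝ F] [FiniteDimensional ℝ E] [BorelSpace E] {μ : Measure E}
  [μ.IsAddHaarMeasure]

theorem integral_sum_norm_fderiv_sq_eq_hardyField (b : OrthonormalBasis ι ℝ E) (ω : ℝ) {δ : ℝ}
    {ψ : E → F} (hψ : ContDiff ℝ 1 ψ) (hψc : HasCompactSupport ψ)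
    (hδ : ∀ y ∈ tsupport ψ, ‖y‖ ^ 2 + δ ≠ 0) :
    ∫ y, ∑ i, ‖fderiv ℝ ψ y (b i)‖ ^ 2 ∂μ
      = ∫ y, twistedEnergyDensity b (hardyField ω δ) ψ y ∂μ
        + hardyExponent E ^ 2 * ∫ y, ‖ψ y‖ ^ 2 / (‖y‖ ^ 2 + δ) ∂μ
        + 2 * ω * ∫ y, ‖ψ y‖ ^ 2 ∂μ - ω ^ 2 * ∫ y, ‖y‖ ^ 2 * ‖ψ y‖ ^ 2 ∂μ
        + ∫ y, hardyRemainder ω δ y * ‖ψ y‖ ^ 2 ∂μ := by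
  have hint {f : E → ℝ} (hf : ContinuousOn f (tsupport ψ)) :
      Integrable (fun y => f y * ‖ψ y‖ ^ 2) μ :=
    integrable_mul_norm_sq hψ.continuous hψc hf
  have hinv : ContinuousOn (fun y => (‖y‖ ^ 2 + δ)⁻¹) (tsupport ψ) :=
    ContinuousOn.inv₀ (by fun_prop) hδ
  have hhardy := (hint hinv).const_mul (hardyExponent E ^ 2)
  have hmass := (hint (f := fun _ => 1) (by fun_prop)).const_mul (2 * ω)
  have hharm := (hint (f := fun y => ‖y‖ ^ 2) (by fun_prop)).const_mul (ω ^ 2)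
  have hrem : Integrable (fun y => hardyRemainder ω δ y * ‖ψ y‖ ^ 2) μ :=
    hint (by unfold hardyRemainder; simp only [div_eq_mul_inv]; fun_prop)
  have hpot (y) : (divergence (hardyField ω δ) y - ‖hardyField ω δ y‖ ^ 2) * ‖ψ y‖ ^ 2
      = hardyExponent E ^ 2 * ((‖y‖ ^ 2 + δ)⁻¹ * ‖ψ y‖ ^ 2) + 2 * ω * (1 * ‖ψ y‖ ^ 2)
        + hardyRemainder ω δ y * ‖ψ y‖ ^ 2 - ω ^ 2 * (‖y‖ ^ 2 * ‖ψ y‖ ^ 2) := by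
    by_cases hy : y ∈ tsupport ψ
    · rw [divergence_hardyField_sub_norm_sq ω (hδ y hy)]
      ring
    · simp [image_eq_zero_of_notMem_tsupport hy]
  rw [integral_sum_norm_fderiv_sq_eq b hψ hψc fun y hy =>
    contDiffAt_hardyField (n := 1) ω (hδ y hy)]
  simp_rw [hpot, div_eq_inv_mul]
  rw [integral_sub ((hhardy.fun_add hmass).fun_add hrem) hharm,
    integral_add (hhardy.fun_add hmass) hrem, integral_add hhardy hmass]
  simp only [integral_const_mul, one_mul]
  ring

lemma regularized_hardy_le (hE : 2 ≤ finrank ℝ E) (b : OrthonormalBasis ι ℝ E) {ω δ : ℝ}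
    (hω : 0 ≤ ω) (hδ : 0 < δ) {ψ : E → F} (hψ : ContDiff ℝ 1 ψ) (hψc : HasCompactSupport ψ) :
    hardyExponent E ^ 2 * ∫ y, ‖ψ y‖ ^ 2 / (‖y‖ ^ 2 + δ) ∂μ + 2 * ω * ∫ y, ‖ψ y‖ ^ 2 ∂μ
      ≤ ∫ y, ∑ i, ‖fderiv ℝ ψ y (b i)‖ ^ 2 ∂μ + ω ^ 2 * ∫ y, ‖y‖ ^ 2 * ‖ψ y‖ ^ 2 ∂μ := by
  have htwisted : 0 ≤ ∫ y, twistedEnergyDensity b (hardyField ω δ) ψ y ∂μ :=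
    integral_nonneg fun y => Finset.sum_nonneg fun i _ => sq_nonneg _
  have hrem : 0 ≤ ∫ y, hardyRemainder ω δ y * ‖ψ y‖ ^ 2 ∂μ :=
    integral_nonneg fun y => mul_nonneg (hardyRemainder_nonneg hE hω hδ.le y) (sq_nonneg _)
  linarith [integral_sum_norm_fderiv_sq_eq_hardyField (μ := μ) b ω hψ hψc
    fun y _ => (by positivity : ‖y‖ ^ 2 + δ ≠ 0)]

theorem two_mul_integral_norm_sq_le_hardyOscillatorForm (hE : 2 ≤ finrank ℝ E)
    (b : OrthonormalBasis ι ℝ E) {ω : ℝ} (hω : 0 ≤ ω) {ψ : E → F} (hψ : ContDiff ℝ 1 ψ)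
    (hψc : HasCompactSupport ψ) :
    2 * ω * ∫ y, ‖ψ y‖ ^ 2 ∂μ ≤ hardyOscillatorForm μ b ω ψ := by
  have : Nontrivial E := Module.nontrivial_of_finrank_pos (R := ℝ) (by omega)
  suffices hlim : hardyExponent E ^ 2 * ∫ y, ‖ψ y‖ ^ 2 / ‖y‖ ^ 2 ∂μ + 2 * ω * ∫ y, ‖ψ y‖ ^ 2 ∂μ
      ≤ ∫ y, ∑ i, ‖fderiv ℝ ψ y (b i)‖ ^ 2 ∂μ + ω ^ 2 * ∫ y, ‖y‖ ^ 2 * ‖ψ y‖ ^ 2 ∂μ by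
    unfold hardyOscillatorForm
    linarith
  have hreg {δ : ℝ} (hδ : 0 < δ) := regularized_hardy_le (μ := μ) hE b hω hδ hψ hψc
  by_cases hint : Integrable (fun y => ‖ψ y‖ ^ 2 / ‖y‖ ^ 2) μ
  · have hψ2 : Continuous fun y => ‖ψ y‖ ^ 2 := hψ.continuous.norm.pow 2
    refine le_of_tendsto (((tendsto_integral_div_norm_sq_add hψ2.aestronglyMeasurable
      hint).const_mul _).add_const _) ?_
    filter_upwards [self_mem_nhdsWithin] with δ hδ using hreg hδ
  · -- In dimension two the integral may diverge, so that its value is `0` by convention.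
    have hnonneg : 0 ≤ hardyExponent E ^ 2 * ∫ y, ‖ψ y‖ ^ 2 / (‖y‖ ^ 2 + 1) ∂μ := by positivity
    rw [integral_undef hint]
    linarith [hreg one_pos]

end LowerBound

section GroundStateRepresentation

variable {ι E F : Type*} [Fintype ι] [NormedAddCommGroup E] [InnerProductSpace ℝ E]
  [NormedAddCommGroup F]

theorem hardyOscillatorForm_eq_add_integral_twistedEnergyDensity [InnerProductSpace ℝ F]
    [FiniteDimensional ℝ E] [MeasurableSpace E] [BorelSpace E] {μ : Measure E} [μ.IsAddHaarMeasure]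
    (b : OrthonormalBasis ι ℝ E) (ω : ℝ) {ψ : E → F} (hψ : ContDiff ℝ 1 ψ)
    (hψc : HasCompactSupport ψ) (hψ0 : 0 ∉ tsupport ψ) :
    hardyOscillatorForm μ b ω ψ
      = 2 * ω * ∫ y, ‖ψ y‖ ^ 2 ∂μ + ∫ y, twistedEnergyDensity b (hardyField ω 0) ψ y ∂μ := by
  have hne (y) (hy : y ∈ tsupport ψ) : ‖y‖ ^ 2 + 0 ≠ 0 := by
    simpa using ne_of_mem_of_not_mem hy hψ0
  rw [hardyOscillatorForm, integral_sum_norm_fderiv_sq_eq_hardyField b ω hψ hψc hne]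
  simp only [hardyRemainder, add_zero, zero_div, zero_mul, integral_zero]
  ring

variable [NormedSpace ℝ F]

lemma fderiv_comp_norm_smul_apply {g : ℝ → ℝ} {g' : ℝ} {y : E} (hy : y ≠ 0)
    (hg : HasDerivAt g g' ‖y‖) (e : F) (v : E) :
    fderiv ℝ (fun z => g ‖z‖ • e) y v = (g' / ‖y‖ * ⟪v, y⟫) • e := by
  have hnorm : HasFDerivAt (fun z : E => ‖z‖) (‖y‖⁻¹ • innerSL ℝ y) y := by
    have h := (hasStrictFDerivAt_norm_sq y).hasFDerivAt.sqrt (by simpa using hy)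
    simp only [sqrt_sq (norm_nonneg _)] at h
    refine h.congr_fderiv ?_
    ext v
    simp
    ring
  have hradial : HasFDerivAt (fun z => g ‖z‖ • e) _ y :=
    (hg.comp_hasFDerivAt y hnorm).smul_const e
  simp [hradial.fderiv, real_inner_comm, div_eq_mul_inv, mul_assoc]

lemma twistedEnergyDensity_comp_norm_smul (b : OrthonormalBasis ι ℝ E) {V : E → E} {g : ℝ → ℝ}
    {g' p : ℝ} {y : E} (hy : y ≠ 0) (hg : HasDerivAt g g' ‖y‖) (hV : V y = (p / ‖y‖) • y) (e : F) :
    twistedEnergyDensity b V (fun z => g ‖z‖ • e) y = (g' + p * g ‖y‖) ^ 2 * ‖e‖ ^ 2 := by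
  have hterm (i) : ‖fderiv ℝ (fun z => g ‖z‖ • e) y (b i) + ⟪b i, V y⟫ • g ‖y‖ • e‖ ^ 2
      = ((g' + p * g ‖y‖) / ‖y‖ * ‖e‖) ^ 2 * ⟪b i, y⟫ ^ 2 := by
    rw [fderiv_comp_norm_smul_apply hy hg, hV, real_inner_smul_right, smul_smul, ← add_smul,
      norm_smul, mul_pow, norm_eq_abs, sq_abs]
    ring
  have hy' : ‖y‖ ≠ 0 := norm_ne_zero_iff.2 hy
  simp_rw [twistedEnergyDensity, hterm, ← Finset.mul_sum, b.sum_sq_inner_right]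
  field_simp

end GroundStateRepresentation

section RadialFunctions

variable {E F : Type*} [NormedAddCommGroup E] [NormedAddCommGroup F] [NormedSpace ℝ F]

lemma tsupport_comp_norm_smul_subset (g : ℝ → ℝ) (e : F) :
    tsupport (fun y : E => g ‖y‖ • e) ⊆ norm ⁻¹' tsupport g :=
  (tsupport_smul_subset_left (fun y : E => g ‖y‖) _).trans
    (tsupport_comp_subset_preimage g continuous_norm)

lemma zero_notMem_tsupport_comp_norm_smul {g : ℝ → ℝ} (hg : tsupport g ⊆ Set.Ioi 0) (e : F) :
    (0 : E) ∉ tsupport (fun y : E => g ‖y‖ • e) := fun h => by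
  simpa using hg (tsupport_comp_norm_smul_subset g e h)

lemma hasCompactSupport_comp_norm_smul [ProperSpace E] {g : ℝ → ℝ} (hg : HasCompactSupport g)
    (e : F) : HasCompactSupport (fun y : E => g ‖y‖ • e) :=
  have hproper : IsProperMap (norm : E → ℝ) := isProperMap_iff_tendsto_cocompact.2
    ⟨continuous_norm, tendsto_norm_cocompact_atTop.trans atTop_le_cocompact⟩
  (hproper.isCompact_preimage hg).of_isClosed_subset (isClosed_tsupport _)
    (tsupport_comp_norm_smul_subset g e)

lemma contDiff_comp_norm_smul [InnerProductSpace ℝ E] {n : ℕ∞} {g : ℝ → ℝ} (hg : ContDiff ℝ n g)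
    (hg0 : tsupport g ⊆ Set.Ioi 0) (e : F) : ContDiff ℝ n (fun y : E => g ‖y‖ • e) :=
  contDiff_of_forall_mem_tsupport fun y hy =>
    (hg.contDiffAt.comp y (contDiffAt_norm ℝ
      (ne_of_mem_of_not_mem hy (zero_notMem_tsupport_comp_norm_smul hg0 e)))).smul contDiffAt_const

end RadialFunctions

section LogarithmicCutoff

/-- The cutoff `r ↦ χ (t * log r)` on the positive half-line. Extending it by zero is necessary
since `Real.log` is defined on all of `ℝ`, with `log 0 = 0`. -/
noncomputable def logCutoff (χ : ℝ → ℝ) (t : ℝ) : ℝ → ℝ :=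
  (Set.Ioi 0).indicator fun r => χ (t * log r)

variable {χ : ℝ → ℝ} {t : ℝ}

lemma logCutoff_of_pos (χ : ℝ → ℝ) (t : ℝ) {r : ℝ} (hr : 0 < r) :
    logCutoff χ t r = χ (t * log r) :=
  Set.indicator_of_mem hr _

lemma logCutoff_eventuallyEq (χ : ℝ → ℝ) (t : ℝ) {r : ℝ} (hr : 0 < r) :
    logCutoff χ t =ᶠ[𝓝 r] fun s => χ (t * log s) := by
  filter_upwards [lt_mem_nhds hr] with s hs using logCutoff_of_pos χ t hs

lemma abs_logCutoff_le {s : ℝ} (hst : ∀ x, |χ (s * x)| ≤ |χ (t * x)|) (r : ℝ) :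
    |logCutoff χ s r| ≤ |logCutoff χ t r| := by
  by_cases hr : 0 < r
  · simpa only [logCutoff_of_pos _ _ hr] using hst (log r)
  · simp [logCutoff, hr]

lemma tsupport_logCutoff_subset (hχ : HasCompactSupport χ) (ht : t ≠ 0) :
    tsupport (logCutoff χ t) ⊆ (fun x => exp (t⁻¹ * x)) '' tsupport χ := by
  refine closure_minimal (fun r hr => ?_) (hχ.isCompact.image (by fun_prop)).isClosed
  have hr0 : 0 < r := Set.mem_of_indicator_ne_zero hr
  rw [Function.mem_support, logCutoff_of_pos χ t hr0] at hr
  exact ⟨t * log r, subset_tsupport χ hr, by simp [inv_mul_cancel_left₀ ht, exp_log hr0]⟩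

lemma hasCompactSupport_logCutoff (hχ : HasCompactSupport χ) (ht : t ≠ 0) :
    HasCompactSupport (logCutoff χ t) :=
  (hχ.isCompact.image (by fun_prop)).of_isClosed_subset (isClosed_tsupport _)
    (tsupport_logCutoff_subset hχ ht)

lemma tsupport_logCutoff_subset_Ioi (hχ : HasCompactSupport χ) (ht : t ≠ 0) :
    tsupport (logCutoff χ t) ⊆ Set.Ioi 0 :=
  (tsupport_logCutoff_subset hχ ht).trans <| Set.image_subset_iff.2 fun _ _ => exp_pos _

lemma hasDerivAt_logCutoff (hχ : Differentiable ℝ χ) {r : ℝ} (hr : 0 < r) :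
    HasDerivAt (logCutoff χ t) (t / r * deriv χ (t * log r)) r := by
  have h := (hχ _).hasDerivAt.comp r ((hasDerivAt_log hr.ne').const_mul t)
  exact (h.congr_deriv (by ring)).congr_of_eventuallyEq (logCutoff_eventuallyEq χ t hr)

lemma integrableOn_inv_mul_comp_mul_log {f : ℝ → ℝ} (hf : Integrable f) (ht : t ≠ 0) :
    IntegrableOn (fun r => r⁻¹ * f (t * log r)) (Set.Ioi 0) := by
  rw [← range_exp, ← Set.image_univ, integrableOn_image_iff_integrableOn_abs_deriv_smul .univ
    (fun x _ => (hasDerivAt_exp x).hasDerivWithinAt) exp_injective.injOn]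
  simpa [abs_exp] using hf.comp_mul_left' ht

lemma integral_inv_mul_comp_mul_log (f : ℝ → ℝ) (t : ℝ) :
    ∫ r in Set.Ioi 0, r⁻¹ * f (t * log r) = |t⁻¹| * ∫ x, f x := by
  rw [← range_exp, ← Set.image_univ, integral_image_eq_integral_abs_deriv_smul .univ
    (fun x _ => (hasDerivAt_exp x).hasDerivWithinAt) exp_injective.injOn]
  simpa [abs_exp] using Measure.integral_comp_mul_left f t

end LogarithmicCutoff

section GroundStateProfile

/-- The radial profile of the formal ground state, with `c` the Hardy exponent and `ω` the
frequency of the harmonic potential. -/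
noncomputable def groundStateProfile (c ω r : ℝ) : ℝ := r ^ (-c) * exp (-(ω / 2) * r ^ 2)

lemma groundStateProfile_pos (c ω : ℝ) {r : ℝ} (hr : 0 < r) : 0 < groundStateProfile c ω r := by
  unfold groundStateProfile
  positivity

lemma contDiffAt_groundStateProfile {n : ℕ∞} (c ω : ℝ) {r : ℝ} (hr : r ≠ 0) :
    ContDiffAt ℝ n (groundStateProfile c ω) r := by
  unfold groundStateProfile
  exact (contDiffAt_id.rpow_const_of_ne hr).mul (by fun_prop)

lemma hasDerivAt_groundStateProfile (c ω : ℝ) {r : ℝ} (hr : 0 < r) :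
    HasDerivAt (groundStateProfile c ω) (-(c / r + ω * r) * groundStateProfile c ω r) r := by
  have hgauss : HasDerivAt (fun s : ℝ => exp (-(ω / 2) * s ^ 2))
      (exp (-(ω / 2) * r ^ 2) * (-ω * r)) r :=
    ((hasDerivAt_pow 2 r).const_mul _).exp.congr_deriv (by push_cast; ring)
  refine ((hasDerivAt_rpow_const (p := -c) (.inl hr.ne')).mul hgauss).congr_deriv ?_
  rw [rpow_sub_one hr.ne', groundStateProfile]
  ring

lemma pow_mul_groundStateProfile_sq {n : ℕ} {c : ℝ} (hn : (n : ℝ) = 2 * c + 1) (ω : ℝ) {r : ℝ}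
    (hr : 0 < r) : r ^ n * groundStateProfile c ω r ^ 2 = r * exp (-ω * r ^ 2) := by
  have hpow : r ^ n * (r ^ (-c)) ^ 2 = r := by
    rw [← rpow_natCast r n, ← rpow_mul_natCast hr.le, ← rpow_add hr, hn]
    ring_nf
    exact rpow_one r
  have hexp : exp (-(ω / 2) * r ^ 2) ^ 2 = exp (-ω * r ^ 2) := by
    rw [← exp_nat_mul]
    ring_nf
  rw [groundStateProfile, mul_pow, ← mul_assoc, hpow, hexp]

/-- The ground state profile cut off on the logarithmic scale `1 / t`, away from `0` and `∞`. -/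
noncomputable def truncatedProfile (χ : ℝ → ℝ) (t c ω r : ℝ) : ℝ :=
  logCutoff χ t r * groundStateProfile c ω r

variable {χ : ℝ → ℝ} {t : ℝ}

lemma tsupport_truncatedProfile_subset (c ω : ℝ) :
    tsupport (truncatedProfile χ t c ω) ⊆ tsupport (logCutoff χ t) :=
  tsupport_mul_subset_left

lemma contDiff_truncatedProfile {n : ℕ∞} (hχ : ContDiff ℝ n χ) (hχc : HasCompactSupport χ)
    (ht : t ≠ 0) (c ω : ℝ) : ContDiff ℝ n (truncatedProfile χ t c ω) :=
  contDiff_of_forall_mem_tsupport fun r hr => by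
    have hr0 : 0 < r :=
      tsupport_logCutoff_subset_Ioi hχc ht (tsupport_truncatedProfile_subset c ω hr)
    have hcutoff : ContDiffAt ℝ n (logCutoff χ t) r :=
      (hχ.contDiffAt.comp r (contDiffAt_const.mul (contDiffAt_log.2 hr0.ne'))).congr_of_eventuallyEq
        (logCutoff_eventuallyEq χ t hr0)
    exact hcutoff.mul (contDiffAt_groundStateProfile c ω hr0.ne')

lemma hasDerivAt_truncatedProfile (hχ : Differentiable ℝ χ) (t c ω : ℝ) {r : ℝ} (hr : 0 < r) :
    HasDerivAt (truncatedProfile χ t c ω)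
      (t / r * deriv χ (t * log r) * groundStateProfile c ω r
        - (c / r + ω * r) * truncatedProfile χ t c ω r) r :=
  ((hasDerivAt_logCutoff hχ hr).mul (hasDerivAt_groundStateProfile c ω hr)).congr_deriv <| by
    rw [truncatedProfile]
    ring

end GroundStateProfile

section TrialFunctions

variable {E F : Type*} [NormedAddCommGroup E] [NormedAddCommGroup F] [NormedSpace ℝ F]

/-- The trial functions for the optimality of the lower bound: the truncated ground state in the
direction `e`. -/
noncomputable def truncatedGroundState [NormedSpace ℝ E] (χ : ℝ → ℝ) (t ω : ℝ) (e : F)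
    (y : E) : F :=
  truncatedProfile χ t (hardyExponent E) ω ‖y‖ • e

variable {χ : ℝ → ℝ} {t : ℝ}

lemma zero_notMem_tsupport_truncatedGroundState [NormedSpace ℝ E] (hχ : HasCompactSupport χ)
    (ht : t ≠ 0) (ω : ℝ) (e : F) : (0 : E) ∉ tsupport (truncatedGroundState χ t ω e) :=
  zero_notMem_tsupport_comp_norm_smul
    ((tsupport_truncatedProfile_subset _ ω).trans (tsupport_logCutoff_subset_Ioi hχ ht)) e

lemma hasCompactSupport_truncatedGroundState [NormedSpace ℝ E] [ProperSpace E]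
    (hχ : HasCompactSupport χ) (ht : t ≠ 0) (ω : ℝ) (e : F) :
    HasCompactSupport (truncatedGroundState (E := E) χ t ω e) :=
  hasCompactSupport_comp_norm_smul ((hasCompactSupport_logCutoff hχ ht).of_isClosed_subset
    (isClosed_tsupport _) (tsupport_truncatedProfile_subset _ ω)) e

lemma norm_truncatedGroundState_le [NormedSpace ℝ E] {s : ℝ}
    (hst : ∀ x, |χ (s * x)| ≤ |χ (t * x)|) (ω : ℝ) (e : F) (y : E) :
    ‖truncatedGroundState χ s ω e y‖ ≤ ‖truncatedGroundState χ t ω e y‖ := by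
  simp only [truncatedGroundState, truncatedProfile, norm_smul, norm_mul, norm_eq_abs]
  gcongr ?_ * _ * _
  exact abs_logCutoff_le hst _

variable [InnerProductSpace ℝ E] {ι : Type*} [Fintype ι]

lemma contDiff_truncatedGroundState {n : ℕ∞} (hχ : ContDiff ℝ n χ) (hχc : HasCompactSupport χ)
    (ht : t ≠ 0) (ω : ℝ) (e : F) : ContDiff ℝ n (truncatedGroundState (E := E) χ t ω e) :=
  contDiff_comp_norm_smul (contDiff_truncatedProfile hχ hχc ht _ ω)
    ((tsupport_truncatedProfile_subset _ ω).trans (tsupport_logCutoff_subset_Ioi hχc ht)) e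

lemma twistedEnergyDensity_truncatedGroundState (b : OrthonormalBasis ι ℝ E)
    (hχ : Differentiable ℝ χ) (t ω : ℝ) (e : F) {y : E} (hy : y ≠ 0) :
    twistedEnergyDensity b (hardyField ω 0) (truncatedGroundState χ t ω e) y
      = (t / ‖y‖ * deriv χ (t * log ‖y‖) * groundStateProfile (hardyExponent E) ω ‖y‖) ^ 2
        * ‖e‖ ^ 2 := by
  have hy' : 0 < ‖y‖ := norm_pos_iff.2 hy
  have hV : hardyField ω 0 y = ((hardyExponent E / ‖y‖ + ω * ‖y‖) / ‖y‖) • y := by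
    rw [hardyField]
    field_simp
    simp
  unfold truncatedGroundState
  rw [twistedEnergyDensity_comp_norm_smul b hy
    (hasDerivAt_truncatedProfile hχ t (hardyExponent E) ω hy') hV]
  ring

variable [FiniteDimensional ℝ E] [Nontrivial E] [MeasurableSpace E] [BorelSpace E] (μ : Measure E)
  [μ.IsAddHaarMeasure]

lemma integral_twistedEnergyDensity_truncatedGroundState (b : OrthonormalBasis ι ℝ E)
    (hχ : Differentiable ℝ χ) (t ω : ℝ) (e : F) :
    ∫ y, twistedEnergyDensity b (hardyField ω 0) (truncatedGroundState χ t ω e) y ∂μ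
      = finrank ℝ E * μ.real (Metric.ball 0 1) * (t ^ 2 * ‖e‖ ^ 2
        * ∫ r in Set.Ioi 0, exp (-ω * r ^ 2) * (r⁻¹ * deriv χ (t * log r) ^ 2)) := by
  have hae : ∀ᵐ y ∂μ, y ≠ 0 := by simp [ae_iff]
  have hdim : ((finrank ℝ E - 1 : ℕ) : ℝ) = 2 * hardyExponent E + 1 := by
    rw [Nat.cast_pred finrank_pos, hardyExponent]
    ring
  have hdensity := hae.mono fun y hy =>
    twistedEnergyDensity_truncatedGroundState b hχ t ω e hy
  rw [integral_congr_ae hdensity, integral_fun_norm_addHaar μ fun r => (t / r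
      * deriv χ (t * log r) * groundStateProfile (hardyExponent E) ω r) ^ 2 * ‖e‖ ^ 2,
    nsmul_eq_mul, smul_eq_mul, ← mul_assoc, ← integral_const_mul (t ^ 2 * ‖e‖ ^ 2)]
  congr 1
  refine setIntegral_congr_fun measurableSet_Ioi fun r (hr : 0 < r) => ?_
  calc r ^ (finrank ℝ E - 1) * ((t / r * deriv χ (t * log r)
        * groundStateProfile (hardyExponent E) ω r) ^ 2 * ‖e‖ ^ 2)
      = (r ^ (finrank ℝ E - 1) * groundStateProfile (hardyExponent E) ω r ^ 2)
        * (t / r * deriv χ (t * log r)) ^ 2 * ‖e‖ ^ 2 := by ring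
    _ = t ^ 2 * ‖e‖ ^ 2 * (exp (-ω * r ^ 2) * (r⁻¹ * deriv χ (t * log r) ^ 2)) := by
      rw [pow_mul_groundStateProfile_sq hdim ω hr]
      field_simp

lemma integral_twistedEnergyDensity_truncatedGroundState_le (b : OrthonormalBasis ι ℝ E)
    (hχ : ContDiff ℝ 1 χ) (hχc : HasCompactSupport χ) {t ω : ℝ} (ht : 0 < t) (hω : 0 ≤ ω) (e : F) :
    ∫ y, twistedEnergyDensity b (hardyField ω 0) (truncatedGroundState χ t ω e) y ∂μ
      ≤ t * (finrank ℝ E * μ.real (Metric.ball 0 1) * ‖e‖ ^ 2 * ∫ x, deriv χ x ^ 2) := by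
  have hderivc : HasCompactSupport fun x => deriv χ x ^ 2 :=
    hχc.deriv.comp_left (g := fun x : ℝ => x ^ 2) (by simp)
  have hderiv : Integrable fun x => deriv χ x ^ 2 :=
    (hχ.continuous_deriv_one.pow 2).integrable_of_hasCompactSupport hderivc
  have hle : ∫ r in Set.Ioi 0, exp (-ω * r ^ 2) * (r⁻¹ * deriv χ (t * log r) ^ 2)
      ≤ ∫ r in Set.Ioi 0, r⁻¹ * deriv χ (t * log r) ^ 2 := by
    refine integral_mono_of_nonneg ?_ (integrableOn_inv_mul_comp_mul_log hderiv ht.ne') ?_ <;>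
      refine ae_restrict_of_forall_mem measurableSet_Ioi fun r (hr : 0 < r) => ?_
    · positivity
    · exact mul_le_of_le_one_left (by positivity)
        (exp_le_one_iff.2 (by nlinarith [sq_nonneg r]))
  rw [integral_inv_mul_comp_mul_log (fun x => deriv χ x ^ 2), abs_of_pos (inv_pos.2 ht)] at hle
  rw [integral_twistedEnergyDensity_truncatedGroundState μ b (hχ.differentiable one_ne_zero)]
  calc _ ≤ finrank ℝ E * μ.real (Metric.ball 0 1) * (t ^ 2 * ‖e‖ ^ 2
        * (t⁻¹ * ∫ x, deriv χ x ^ 2)) := by gcongr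
    _ = _ := by field_simp

end TrialFunctions

section Sharpness

lemma contDiffBump_le_contDiffBump_smul {E : Type*} [NormedAddCommGroup E] [NormedSpace ℝ E]
    [HasContDiffBump E] (χ : ContDiffBump (0 : E)) {t : ℝ} (ht : 0 ≤ t)
    (htχ : t * χ.rOut ≤ χ.rIn) (x : E) : χ x ≤ χ (t • x) := by
  rcases le_total χ.rOut ‖x‖ with hx | hx
  · simpa [χ.zero_of_le_dist (by simpa using hx)] using χ.nonneg
  · have htx : t • x ∈ Metric.closedBall 0 χ.rIn := by
      simpa [norm_smul, abs_of_nonneg ht] using (mul_le_mul_of_nonneg_left hx ht).trans htχ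
    simpa [χ.one_of_mem_closedBall htx] using χ.le_one

variable {ι E F : Type*} [Fintype ι] [NormedAddCommGroup E] [InnerProductSpace ℝ E]
  [FiniteDimensional ℝ E] [MeasurableSpace E] [BorelSpace E]
  [NormedAddCommGroup F] [NormedSpace ℝ F]

lemma integral_norm_sq_truncatedGroundState_le (μ : Measure E) [μ.IsAddHaarMeasure] {χ : ℝ → ℝ}
    {s t : ℝ} (hχ : ContDiff ℝ 1 χ) (hχc : HasCompactSupport χ) (ht : t ≠ 0)
    (hst : ∀ x, |χ (s * x)| ≤ |χ (t * x)|) (ω : ℝ) (e : F) :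
    ∫ y, ‖truncatedGroundState χ s ω e y‖ ^ 2 ∂μ
      ≤ ∫ y, ‖truncatedGroundState χ t ω e y‖ ^ 2 ∂μ := by
  have hint : Integrable (fun y => 1 * ‖truncatedGroundState χ t ω e y‖ ^ 2) μ :=
    integrable_mul_norm_sq (contDiff_truncatedGroundState (n := 1) hχ hχc ht ω e).continuous
      (hasCompactSupport_truncatedGroundState hχc ht ω e) continuousOn_const
  simp only [one_mul] at hint
  refine integral_mono_of_nonneg (.of_forall fun _ => sq_nonneg _) hint (.of_forall fun y => ?_)
  exact pow_le_pow_left₀ (norm_nonneg _) (norm_truncatedGroundState_le hst ω e y) 2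

variable [Nontrivial E]

lemma integral_norm_sq_truncatedGroundState_pos (μ : Measure E) [μ.IsAddHaarMeasure] {χ : ℝ → ℝ}
    {t : ℝ} (hχ : ContDiff ℝ 1 χ) (hχc : HasCompactSupport χ) (hχ0 : χ 0 ≠ 0) (ht : t ≠ 0) (ω : ℝ)
    {e : F} (he : e ≠ 0) : 0 < ∫ y, ‖truncatedGroundState χ t ω e y‖ ^ 2 ∂μ := by
  obtain ⟨y, hy⟩ : (Metric.sphere (0 : E) 1).Nonempty := NormedSpace.sphere_nonempty.2 zero_le_one
  have hcont : Continuous (truncatedGroundState (E := E) χ t ω e) :=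
    (contDiff_truncatedGroundState (n := 1) hχ hχc ht ω e).continuous
  have hne : truncatedGroundState χ t ω e y ≠ 0 := by
    simp [truncatedGroundState, truncatedProfile, mem_sphere_zero_iff_norm.1 hy,
      logCutoff_of_pos χ t one_pos, hχ0, he, (groundStateProfile_pos _ ω one_pos).ne']
  exact (hcont.norm.pow 2).integral_pos_of_hasCompactSupport_nonneg_nonzero (x := y)
    ((hasCompactSupport_truncatedGroundState hχc ht ω e).norm.comp_left
      (g := fun x : ℝ => x ^ 2) (by simp)) (fun _ => sq_nonneg _) (by simpa using hne)

lemma exists_integral_twistedEnergyDensity_truncatedGroundState_lt (μ : Measure E)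
    [μ.IsAddHaarMeasure] (b : OrthonormalBasis ι ℝ E) (χ : ContDiffBump (0 : ℝ)) {ω ε : ℝ}
    (hω : 0 ≤ ω) (hε : 0 < ε) {e : F} (he : e ≠ 0) :
    ∃ t ≠ 0, ∫ y, twistedEnergyDensity b (hardyField ω 0) (truncatedGroundState χ t ω e) y ∂μ
      < ε * ∫ y, ‖truncatedGroundState χ t ω e y‖ ^ 2 ∂μ := by
  have hχ : ContDiff ℝ 1 χ := χ.contDiff
  set m := ∫ y, ‖truncatedGroundState χ 1 ω e y‖ ^ 2 ∂μ
  set K := finrank ℝ E * μ.real (Metric.ball 0 1) * ‖e‖ ^ 2 * ∫ x, deriv χ x ^ 2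
  have hm0 : 0 < m := integral_norm_sq_truncatedGroundState_pos μ hχ χ.hasCompactSupport
    (χ.pos_of_mem_ball (Metric.mem_ball_self χ.rOut_pos)).ne' one_ne_zero ω he
  obtain ⟨t, ⟨htK, htχ⟩, ht⟩ : ∃ t, (t * K < ε * m ∧ t * χ.rOut < χ.rIn) ∧ 0 < t := by
    have hsmall (C : ℝ) {D : ℝ} (hD : 0 < D) : ∀ᶠ t in 𝓝[>] 0, t * C < D :=
      nhdsWithin_le_nhds <|
        ((continuous_mul_const C).tendsto' 0 0 (zero_mul C)).eventually_lt_const hD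
    exact (((hsmall K (mul_pos hε hm0)).and (hsmall χ.rOut χ.rIn_pos)).and
      self_mem_nhdsWithin).exists
  have hmass : m ≤ ∫ y, ‖truncatedGroundState χ t ω e y‖ ^ 2 ∂μ :=
    integral_norm_sq_truncatedGroundState_le μ hχ χ.hasCompactSupport ht.ne' (fun x => by
      simpa only [one_mul, abs_of_nonneg χ.nonneg, smul_eq_mul] using
        contDiffBump_le_contDiffBump_smul χ ht.le htχ.le x) ω e
  refine ⟨t, ht.ne', ?_⟩
  calc ∫ y, twistedEnergyDensity b (hardyField ω 0) (truncatedGroundState χ t ω e) y ∂μ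
      ≤ t * K := integral_twistedEnergyDensity_truncatedGroundState_le μ b hχ
        χ.hasCompactSupport ht hω e
    _ < ε * m := htK
    _ ≤ ε * ∫ y, ‖truncatedGroundState χ t ω e y‖ ^ 2 ∂μ := by gcongr

end Sharpness

theorem exists_hardyOscillatorForm_lt {ι E F : Type*} [Fintype ι] [NormedAddCommGroup E]
    [InnerProductSpace ℝ E] [FiniteDimensional ℝ E] [Nontrivial E] [MeasurableSpace E]
    [BorelSpace E] [NormedAddCommGroup F] [InnerProductSpace ℝ F] [Nontrivial F] (μ : Measure E)
    [μ.IsAddHaarMeasure] (b : OrthonormalBasis ι ℝ E) {ω ε : ℝ} (hω : 0 ≤ ω) (hε : 0 < ε) :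
    ∃ ψ : E → F, ContDiff ℝ (⊤ : ℕ∞) ψ ∧ HasCompactSupport ψ ∧ ψ ≠ 0 ∧
      hardyOscillatorForm μ b ω ψ < (2 * ω + ε) * ∫ y, ‖ψ y‖ ^ 2 ∂μ := by
  obtain ⟨e, he⟩ := exists_ne (0 : F)
  let χ : ContDiffBump (0 : ℝ) := ⟨1, 2, one_pos, one_lt_two⟩
  obtain ⟨t, ht, henergy⟩ :=
    exists_integral_twistedEnergyDensity_truncatedGroundState_lt μ b χ hω hε he
  have hsmooth : ContDiff ℝ (⊤ : ℕ∞) (truncatedGroundState (E := E) χ t ω e) :=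
    contDiff_truncatedGroundState χ.contDiff χ.hasCompactSupport ht ω e
  have hsupp : HasCompactSupport (truncatedGroundState (E := E) χ t ω e) :=
    hasCompactSupport_truncatedGroundState χ.hasCompactSupport ht ω e
  refine ⟨_, hsmooth, hsupp, fun h => ?_, ?_⟩
  · simp [h, twistedEnergyDensity] at henergy
  · rw [hardyOscillatorForm_eq_add_integral_twistedEnergyDensity b ω (hsmooth.of_le (by simp))
      hsupp (zero_notMem_tsupport_truncatedGroundState χ.hasCompactSupport ht ω e), add_mul]
    gcongr

theorem stmt14_general {ι E F : Type*} [Fintype ι] [NormedAddCommGroup E] [InnerProductSpace ℝ E]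
    [FiniteDimensional ℝ E] [MeasurableSpace E] [BorelSpace E] [NormedAddCommGroup F]
    [InnerProductSpace ℝ F] [Nontrivial F] (μ : Measure E) [μ.IsAddHaarMeasure]
    (b : OrthonormalBasis ι ℝ E) (hE : 2 ≤ finrank ℝ E) {ω : ℝ} (hω : 0 ≤ ω) :
    (∀ ψ : E → F, ContDiff ℝ 1 ψ → HasCompactSupport ψ →
      2 * ω * ∫ y, ‖ψ y‖ ^ 2 ∂μ ≤ hardyOscillatorForm μ b ω ψ) ∧
    (∀ ε > (0 : ℝ), ∃ ψ : E → F, ContDiff ℝ (⊤ : ℕ∞) ψ ∧ HasCompactSupport ψ ∧ ψ ≠ 0 ∧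
      hardyOscillatorForm μ b ω ψ < (2 * ω + ε) * ∫ y, ‖ψ y‖ ^ 2 ∂μ) := by
  have : Nontrivial E := Module.nontrivial_of_finrank_pos (R := ℝ) (by omega)
  exact ⟨fun _ => two_mul_integral_norm_sq_le_hardyOscillatorForm hE b hω,
    fun _ => exists_hardyOscillatorForm_lt μ b hω⟩

lemma lForm_eq_hardyOscillatorForm (d : ℕ) (ψ : EuclideanSpace ℝ (Fin d) → ℂ) :
    lForm d ψ = hardyOscillatorForm volume (EuclideanSpace.basisFun (Fin d) ℝ) (1 / 4) ψ := by
  norm_num [lForm, hardyOscillatorForm, hardyExponent]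

theorem stmt14 (d : ℕ) (hd : 2 ≤ d) :
    (∀ ψ : EuclideanSpace ℝ (Fin d) → ℂ, ContDiff ℝ (⊤ : ℕ∞) ψ → HasCompactSupport ψ →
      lForm d ψ ≥ (1/2 : ℝ) * ∫ y, ‖ψ y‖^2) ∧
    (∀ ε > (0:ℝ), ∃ ψ : EuclideanSpace ℝ (Fin d) → ℂ,
      ContDiff ℝ (⊤ : ℕ∞) ψ ∧ HasCompactSupport ψ ∧ ψ ≠ 0 ∧
      lForm d ψ < (1/2 + ε) * ∫ y, ‖ψ y‖^2) := by
  have h := stmt14_general (F := ℂ) volume (EuclideanSpace.basisFun (Fin d) ℝ) (by simpa using hd)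
    (ω := 1 / 4) (by norm_num)
  simp only [← lForm_eq_hardyOscillatorForm, show (2 : ℝ) * (1 / 4) = 1 / 2 by norm_num] at h
  exact ⟨fun ψ hψ => h.1 ψ (hψ.of_le (by simp)), h.2⟩
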